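/- Let θ > 0, t > 0 and f ∈ 𝒮. Then the one-sided limits (P_t f)'(0⁺) and (P_t f)''(0⁺) exist and are finite, and (P_t f)''(0⁺) = 2θ·(P_t f)'(0⁺). -/

import Mathlib

open MeasureTheory Real Filter Set

/-- Complementary error function `erfc(x) = (2/√π)·∫_x^∞ e^{−y²} dy`. -/
noncomputable def erfc (x : ℝ) : ℝ :=
  (2 / Real.sqrt Real.pi) * ∫ y in Set.Ioi x, Real.exp (-y ^ 2)

/-- `g_t(x) = θ·exp(2θx + 2θ²t)·erfc(x/√(2t) + θ·√(2t))`. -/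
noncomputable def gfun (θ t x : ℝ) : ℝ :=
  θ * Real.exp (2 * θ * x + 2 * θ ^ 2 * t) *
    erfc (x / Real.sqrt (2 * t) + θ * Real.sqrt (2 * t))

/-- The Gaussian kernel `p_t(x,y) = (2πt)^{−1/2}·exp(−(y−x)²/(2t))`. -/
noncomputable def pker (t x y : ℝ) : ℝ :=
  (Real.sqrt (2 * Real.pi * t))⁻¹ * Real.exp (-(y - x) ^ 2 / (2 * t))

/-- The sticky Brownian motion semigroup:
`P_t f(x) = ∫_0^∞ (p_t(x,y) − p_t(x,−y) + 2 g_t(x+y)) f(y) dy + (1/θ) g_t(x) f(0)`. -/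
noncomputable def Pt (θ t : ℝ) (f : ℝ → ℝ) (x : ℝ) : ℝ :=
  (∫ y in Set.Ioi (0:ℝ), (pker t x y - pker t x (-y) + 2 * gfun θ t (x + y)) * f y)
    + (1 / θ) * gfun θ t x * f 0

/-- `f ∈ 𝒮`: `f` is C² on `(0,∞)`, the one-sided limits `f(0⁺)`, `f'(0⁺)`, `f''(0⁺)` exist
and are finite, and `lim_{x→∞} f(x) = 0`. -/
def memS (f : ℝ → ℝ) : Prop :=
  ContDiffOn ℝ 2 f (Set.Ioi 0) ∧
  (∃ a : ℝ, Filter.Tendsto f (nhdsWithin 0 (Set.Ioi 0)) (nhds a)) ∧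
  (∃ b : ℝ, Filter.Tendsto (deriv f) (nhdsWithin 0 (Set.Ioi 0)) (nhds b)) ∧
  (∃ c : ℝ, Filter.Tendsto (deriv (deriv f)) (nhdsWithin 0 (Set.Ioi 0)) (nhds c)) ∧
  Filter.Tendsto f Filter.atTop (nhds 0)

/-!
Write `P_t f = w + u`, where `w(x) = A(-x) - A(x)` with `A(x) = ∫_0^∞ p_t(0, y + x) f(y) dy`, and
`u` collects the terms containing `g_t`. These formulas make sense for every real `x`.
Differentiation under the integral sign shows that `A` is smooth, and
`g_t' = 2θ(g_t - p_t(0, ·))` gives `u' = 2θu - 2v` with `v = 2θA + f(0) p_t(0, ·)`, so `u` is smooth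
as well. At `0`, the odd function `w` has `w''(0) = 0` and `w'(0) = -2A'(0)`, while
`v'(0) = 2θA'(0) = -θw'(0)` because `p_t(0, ·)` is even. Hence
`(w + u)''(0) = u''(0) = 2θu'(0) - 2v'(0) = 2θ(w + u)'(0)`.
-/

open Asymptotics Polynomial Topology

/-- The function `x ↦ ∫_0^∞ h(y + x) f(y) dy`. Up to reflecting `x`, each of the three integrals
that make up `P_t f` has this form, with `h` the Gaussian kernel or `g_t`. -/
noncomputable def shiftPairing (f h : ℝ → ℝ) (x : ℝ) : ℝ :=
  ∫ y in Ioi (0 : ℝ), h (y + x) * f y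

section Calculus

lemma contDiff_succ_of_hasDerivAt {n : ℕ} {u u' : ℝ → ℝ} (hu : ∀ x, HasDerivAt u (u' x) x)
    (hu' : ContDiff ℝ n u') : ContDiff ℝ (n + 1) u := by
  have hderiv : deriv u = u' := funext fun x => (hu x).deriv
  exact contDiff_succ_iff_deriv.2
    ⟨fun x => (hu x).differentiableAt, fun hn => absurd hn (by simp), hderiv ▸ hu'⟩

lemma contDiff_of_linear_ode {n : ℕ} {a : ℝ} {u v : ℝ → ℝ}
    (hu : ∀ x, HasDerivAt u (a * u x + v x) x) (hv : ContDiff ℝ n v) : ContDiff ℝ n u := by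
  induction n with
  | zero => exact contDiff_zero.2 (continuous_iff_continuousAt.2 fun x => (hu x).continuousAt)
  | succ n ih =>
    have hv' : ContDiff ℝ n v := hv.of_le (by simp)
    exact contDiff_succ_of_hasDerivAt hu ((contDiff_const.mul (ih hv')).add hv')

lemma odd_deriv_of_even {φ : ℝ → ℝ} (hφ : φ.Even) : (deriv φ).Odd := fun x => by
  have h := deriv_comp_neg φ x
  rw [funext hφ] at h
  linarith

lemma even_deriv_of_odd {w : ℝ → ℝ} (hw : w.Odd) : (deriv w).Even := fun x => by
  have h := deriv_comp_neg w x
  rw [funext hw, deriv.fun_neg] at h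
  linarith

lemma integrableOn_exp_neg_mul_of_tendsto {f : ℝ → ℝ} {a l b : ℝ} (hb : 0 < b)
    (hcont : ContinuousOn f (Ioi a)) (hleft : Tendsto f (𝓝[>] a) (𝓝 l))
    (hinfty : f =O[atTop] fun _ => (1 : ℝ)) :
    IntegrableOn (fun y => exp (-b * y) * f y) (Ioi a) := by
  have hupdate : ContinuousOn (Function.update f a l) (Ici a) := by
    rw [continuousOn_update_iff, Ici_sdiff_left]
    exact ⟨hcont, fun _ => hleft⟩
  have heq : EqOn (Function.update f a l) f (Ioi a) := fun y hy =>
    Function.update_of_ne (ne_of_gt hy) _ _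
  have hbound : (fun y => exp (-b * y) * Function.update f a l y) =O[atTop]
      fun y => exp (-b * y) := by
    have h := (isBigO_refl (fun y => exp (-b * y)) atTop).mul hinfty
    simp only [mul_one] at h
    refine h.congr' ?_ EventuallyEq.rfl
    filter_upwards [eventually_gt_atTop a] with y hy
    rw [heq hy]
  refine (integrable_of_isBigO_exp_neg hb (by fun_prop) hbound).congr_fun ?_ measurableSet_Ioi
  exact fun y hy => by simp only [heq hy]

end Calculus

section ShiftPairing

variable {f h h' k : ℝ → ℝ} {b : ℝ}

lemma exists_forall_ge_abs_le_exp (hcont : Continuous h)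
    (hdecay : h =O[atTop] fun z => exp (-b * z)) (a : ℝ) :
    ∃ C, ∀ z, a ≤ z → |h z| ≤ C * exp (-b * z) := by
  obtain ⟨C₁, hC₁⟩ := hdecay.bound
  obtain ⟨N, hN⟩ := eventually_atTop.1 hC₁
  obtain ⟨C₂, hC₂⟩ := (isCompact_Icc (a := a) (b := N)).exists_bound_of_continuousOn
    (by fun_prop : ContinuousOn (fun z => h z * exp (b * z)) _)
  refine ⟨max C₁ C₂, fun z hz => ?_⟩
  rcases le_total N z with hNz | hzN
  · have hlarge := hN z hNz
    rw [norm_eq_abs, norm_eq_abs, abs_exp] at hlarge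
    exact hlarge.trans (by gcongr; exact le_max_left _ _)
  · have hsmall := hC₂ z ⟨hz, hzN⟩
    rw [norm_mul, norm_eq_abs, norm_eq_abs, abs_exp] at hsmall
    calc |h z| = |h z| * exp (b * z) * exp (-b * z) := by
          rw [mul_assoc, ← exp_add, neg_mul, add_neg_cancel, exp_zero, mul_one]
      _ ≤ max C₁ C₂ * exp (-b * z) := by
          gcongr
          exact hsmall.trans (le_max_right _ _)

lemma exists_forall_ball_norm_shift_mul_le (hcont : Continuous h)
    (hdecay : h =O[atTop] fun z => exp (-b * z)) (f : ℝ → ℝ) (x₀ : ℝ) :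
    ∃ C, ∀ y ∈ Ioi (0 : ℝ), ∀ x ∈ Metric.ball x₀ 1,
      ‖h (y + x) * f y‖ ≤ C * ‖exp (-b * y) * f y‖ := by
  obtain ⟨C₁, hC₁⟩ := exists_forall_ge_abs_le_exp hcont hdecay (x₀ - 1)
  obtain ⟨C₂, hC₂⟩ := (isCompact_closedBall x₀ 1).exists_bound_of_continuousOn
    (by fun_prop : ContinuousOn (fun x => C₁ * exp (-b * x)) _)
  refine ⟨C₂, fun y hy x hx => ?_⟩
  have hx' : x₀ - 1 ≤ y + x := by
    have := (abs_lt.1 (Real.dist_eq x x₀ ▸ Metric.mem_ball.1 hx)).1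
    linarith [mem_Ioi.1 hy]
  calc ‖h (y + x) * f y‖ = |h (y + x)| * |f y| := by rw [norm_mul, norm_eq_abs, norm_eq_abs]
    _ ≤ C₁ * exp (-b * (y + x)) * |f y| := by gcongr; exact hC₁ _ hx'
    _ = C₁ * exp (-b * x) * (exp (-b * y) * |f y|) := by
      rw [mul_add, exp_add]
      ring
    _ ≤ C₂ * (exp (-b * y) * |f y|) := by
      gcongr
      exact (le_abs_self _).trans (hC₂ x (Metric.ball_subset_closedBall hx))
    _ = C₂ * ‖exp (-b * y) * f y‖ := by rw [norm_mul, norm_eq_abs, norm_eq_abs, abs_exp]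

lemma aestronglyMeasurable_shift_mul
    (hf : IntegrableOn (fun y => exp (-b * y) * f y) (Ioi 0)) (hcont : Continuous h) (x : ℝ) :
    AEStronglyMeasurable (fun y => h (y + x) * f y) (volume.restrict (Ioi 0)) := by
  have hweight : Continuous fun y => h (y + x) * exp (b * y) := by fun_prop
  refine (hweight.aestronglyMeasurable.mul hf.aestronglyMeasurable).congr (ae_of_all _ fun y => ?_)
  calc h (y + x) * exp (b * y) * (exp (-b * y) * f y)
      = h (y + x) * exp (b * y + -b * y) * f y := by
        rw [exp_add]
        ring
    _ = h (y + x) * f y := by simp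

lemma integrableOn_shift_mul (hf : IntegrableOn (fun y => exp (-b * y) * f y) (Ioi 0))
    (hcont : Continuous h) (hdecay : h =O[atTop] fun z => exp (-b * z)) (x : ℝ) :
    IntegrableOn (fun y => h (y + x) * f y) (Ioi 0) := by
  obtain ⟨C, hC⟩ := exists_forall_ball_norm_shift_mul_le hcont hdecay f x
  refine (hf.norm.const_mul C).mono' (aestronglyMeasurable_shift_mul hf hcont x) ?_
  filter_upwards [ae_restrict_mem measurableSet_Ioi] with y hy
  exact hC y hy x (Metric.mem_ball_self one_pos)

lemma hasDerivAt_shiftPairing (hf : IntegrableOn (fun y => exp (-b * y) * f y) (Ioi 0))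
    (hderiv : ∀ z, HasDerivAt h (h' z) z) (hdecay : h =O[atTop] fun z => exp (-b * z))
    (hcont' : Continuous h') (hdecay' : h' =O[atTop] fun z => exp (-b * z)) (x : ℝ) :
    HasDerivAt (shiftPairing f h) (shiftPairing f h' x) x := by
  have hcont : Continuous h := continuous_iff_continuousAt.2 fun z => (hderiv z).continuousAt
  obtain ⟨C, hC⟩ := exists_forall_ball_norm_shift_mul_le hcont' hdecay' f x
  refine (hasDerivAt_integral_of_dominated_loc_of_deriv_le
    (F' := fun x y => h' (y + x) * f y) (Metric.ball_mem_nhds x one_pos)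
    (Eventually.of_forall (aestronglyMeasurable_shift_mul hf hcont))
    (integrableOn_shift_mul hf hcont hdecay x) (aestronglyMeasurable_shift_mul hf hcont' x)
    ?_ (hf.norm.const_mul C) ?_).2
  · filter_upwards [ae_restrict_mem measurableSet_Ioi] with y hy using hC y hy
  · exact ae_of_all _ fun y z _ => (HasDerivAt.comp_const_add y z (hderiv (y + z))).mul_const (f y)

lemma shiftPairing_const_mul (f h : ℝ → ℝ) (c x : ℝ) :
    shiftPairing f (fun z => c * h z) x = c * shiftPairing f h x := by
  simp only [shiftPairing, mul_assoc, integral_const_mul]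

lemma shiftPairing_sub {x : ℝ} (hh : IntegrableOn (fun y => h (y + x) * f y) (Ioi 0))
    (hk : IntegrableOn (fun y => k (y + x) * f y) (Ioi 0)) :
    shiftPairing f (fun z => h z - k z) x = shiftPairing f h x - shiftPairing f k x := by
  simp only [shiftPairing, sub_mul]
  exact integral_sub hh hk

end ShiftPairing

section HeatKernel

lemma pker_eq_pker_zero (t x y : ℝ) : pker t x y = pker t 0 (y - x) := by
  simp only [pker, sub_zero]

lemma even_pker_zero (t : ℝ) : (pker t 0).Even := fun z => by simp [pker]

lemma hasDerivAt_pker_zero (t z : ℝ) : HasDerivAt (pker t 0) (-t⁻¹ * z * pker t 0 z) z := by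
  have hexponent : HasDerivAt (fun y : ℝ => -(y - 0) ^ 2 / (2 * t)) (-t⁻¹ * z) z :=
    ((((hasDerivAt_id z).sub_const 0).pow 2).neg.div_const (2 * t)).congr_deriv (by
      simp only [id]
      ring)
  refine (hexponent.exp.const_mul (√(2 * π * t))⁻¹).congr_deriv ?_
  simp only [pker]
  ring

lemma hasDerivAt_polynomial_mul_pker_zero (t : ℝ) (p : ℝ[X]) (z : ℝ) :
    HasDerivAt (fun z => p.eval z * pker t 0 z)
      ((derivative p - C t⁻¹ * X * p).eval z * pker t 0 z) z := by
  refine ((p.hasDerivAt z).mul (hasDerivAt_pker_zero t z)).congr_deriv ?_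
  simp only [eval_sub, eval_mul, eval_C, eval_X]
  ring

variable {t : ℝ}

lemma pker_zero_isBigO_exp (ht : 0 < t) (b : ℝ) :
    pker t 0 =O[atTop] fun z => exp (-b * z) := by
  refine IsBigO.of_bound ((√(2 * π * t))⁻¹ * exp (t * b ^ 2 / 2)) (Eventually.of_forall fun z => ?_)
  have hsquare : -(z - 0) ^ 2 / (2 * t) ≤ t * b ^ 2 / 2 + -b * z := by
    have : t * b ^ 2 / 2 + -b * z - -(z - 0) ^ 2 / (2 * t) = (z - t * b) ^ 2 / (2 * t) := by
      field_simp
      ring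
    have : 0 ≤ (z - t * b) ^ 2 / (2 * t) := by positivity
    linarith
  rw [pker, norm_of_nonneg (by positivity), norm_of_nonneg (by positivity), mul_assoc _ (exp _),
    ← exp_add]
  gcongr

lemma polynomial_mul_pker_zero_isBigO_exp (ht : 0 < t) (p : ℝ[X]) (b : ℝ) :
    (fun z => p.eval z * pker t 0 z) =O[atTop] fun z => exp (-b * z) := by
  have hp : p.eval =O[atTop] exp :=
    ((isLittleO_iff_tendsto fun z hz => absurd hz (exp_pos z).ne').2
      p.tendsto_div_exp_atTop).isBigO
  refine (hp.mul (pker_zero_isBigO_exp ht (b + 1))).congr_right fun z => ?_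
  rw [← exp_add]
  ring_nf

lemma contDiff_shiftPairing_polynomial_mul_pker_zero {f : ℝ → ℝ} {b : ℝ} (ht : 0 < t)
    (hf : IntegrableOn (fun y => exp (-b * y) * f y) (Ioi 0)) (n : ℕ) (p : ℝ[X]) :
    ContDiff ℝ n (shiftPairing f fun z => p.eval z * pker t 0 z) := by
  have hderiv (p : ℝ[X]) := hasDerivAt_shiftPairing hf (hasDerivAt_polynomial_mul_pker_zero t p)
    (polynomial_mul_pker_zero_isBigO_exp ht p b) (by unfold pker; fun_prop)
    (polynomial_mul_pker_zero_isBigO_exp ht _ b)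
  induction n generalizing p with
  | zero =>
    exact contDiff_zero.2 (continuous_iff_continuousAt.2 fun x => (hderiv p x).continuousAt)
  | succ n ih => exact contDiff_succ_of_hasDerivAt (hderiv p) (ih _)

lemma contDiff_pker (t x : ℝ) {n : WithTop ℕ∞} : ContDiff ℝ n (pker t x) := by
  unfold pker
  fun_prop

lemma contDiff_shiftPairing_pker_zero {f : ℝ → ℝ} {b : ℝ} (ht : 0 < t)
    (hf : IntegrableOn (fun y => exp (-b * y) * f y) (Ioi 0)) (n : ℕ) :
    ContDiff ℝ n (shiftPairing f (pker t 0)) := by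
  simpa using contDiff_shiftPairing_polynomial_mul_pker_zero ht hf n 1

end HeatKernel

section Erfc

lemma integrable_exp_neg_sq : Integrable fun y : ℝ => exp (-y ^ 2) := by
  simpa using integrable_exp_neg_mul_sq one_pos

lemma hasDerivAt_erfc (x : ℝ) : HasDerivAt erfc (-(2 / √π) * exp (-x ^ 2)) x := by
  have hsplit : erfc = fun x => (2 / √π) *
      ((∫ y in Ioi (0 : ℝ), exp (-y ^ 2)) - ∫ y in (0 : ℝ)..x, exp (-y ^ 2)) := funext fun x => by
    rw [erfc, ← intervalIntegral.integral_interval_add_Ioi (a := 0) (b := x)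
      integrable_exp_neg_sq.integrableOn integrable_exp_neg_sq.integrableOn, add_sub_cancel_left]
  have hcont : Continuous fun y : ℝ => exp (-y ^ 2) := by fun_prop
  rw [hsplit]
  refine ((hcont.integral_hasStrictDerivAt 0 x).hasDerivAt.const_sub _
    |>.const_mul (2 / √π)).congr_deriv ?_
  ring

lemma erfc_nonneg (x : ℝ) : 0 ≤ erfc x :=
  mul_nonneg (by positivity) (integral_nonneg fun _ => (exp_pos _).le)

lemma erfc_le_two_mul_exp_neg_sq {x : ℝ} (hx : 0 ≤ x) : erfc x ≤ 2 * exp (-x ^ 2) := by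
  have hint : Integrable fun y : ℝ => exp (-(y - x) ^ 2) := integrable_exp_neg_sq.comp_sub_right x
  have hgauss : ∫ y : ℝ, exp (-(y - x) ^ 2) = √π := by
    rw [integral_sub_right_eq_self (fun y : ℝ => exp (-y ^ 2)) x]
    simpa using integral_gaussian 1
  have htail : ∫ y in Ioi x, exp (-y ^ 2) ≤ exp (-x ^ 2) * √π :=
    calc ∫ y in Ioi x, exp (-y ^ 2) ≤ ∫ y in Ioi x, exp (-x ^ 2) * exp (-(y - x) ^ 2) := by
          refine setIntegral_mono_on integrable_exp_neg_sq.integrableOn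
            (hint.const_mul _).integrableOn measurableSet_Ioi fun y hy => ?_
          rw [← exp_add, exp_le_exp]
          nlinarith [mem_Ioi.1 hy]
      _ ≤ ∫ y : ℝ, exp (-x ^ 2) * exp (-(y - x) ^ 2) :=
          setIntegral_le_integral (hint.const_mul _) (ae_of_all _ fun y => by positivity)
      _ = exp (-x ^ 2) * √π := by rw [integral_const_mul, hgauss]
  calc erfc x ≤ (2 / √π) * (exp (-x ^ 2) * √π) := by
        unfold erfc
        gcongr
    _ = 2 * exp (-x ^ 2) := by field_simp

end Erfc

section BoundaryKernel

variable {θ t : ℝ}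

-- The exponential prefactor of `g_t` is tuned so that it turns the Gaussian decay of `erfc` into
-- exactly that of the heat kernel.
lemma exp_mul_exp_neg_sq_eq_pker_zero (ht : 0 < t) (θ z : ℝ) :
    exp (2 * θ * z + 2 * θ ^ 2 * t) * exp (-(z / √(2 * t) + θ * √(2 * t)) ^ 2) =
      √π * √(2 * t) * pker t 0 z := by
  have hsq : √(2 * t) ^ 2 = 2 * t := sq_sqrt (by positivity)
  have hexpand : (z / √(2 * t) + θ * √(2 * t)) ^ 2 =
      (z - 0) ^ 2 / (2 * t) + 2 * θ * z + 2 * θ ^ 2 * t := by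
    rw [add_sq, div_pow, mul_pow, hsq]
    field_simp
    ring
  have hsqrt : √(2 * π * t) = √π * √(2 * t) := by
    rw [← sqrt_mul pi_pos.le]
    ring_nf
  rw [pker, hsqrt, mul_inv_cancel_left₀ (by positivity), ← exp_add, hexpand]
  ring_nf

lemma hasDerivAt_gfun (ht : 0 < t) (θ z : ℝ) :
    HasDerivAt (gfun θ t) (2 * θ * (gfun θ t z - pker t 0 z)) z := by
  have hexponent : HasDerivAt (fun x : ℝ => 2 * θ * x + 2 * θ ^ 2 * t) (2 * θ) z := by
    simpa using ((hasDerivAt_id z).const_mul (2 * θ)).add_const (2 * θ ^ 2 * t)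
  have haffine : HasDerivAt (fun x : ℝ => x / √(2 * t) + θ * √(2 * t)) (1 / √(2 * t)) z :=
    ((hasDerivAt_id z).div_const _).add_const _
  refine ((hexponent.exp.const_mul θ).mul ((hasDerivAt_erfc _).comp z haffine)).congr_deriv ?_
  have hpker : pker t 0 z = (√π * √(2 * t))⁻¹ * (exp (2 * θ * z + 2 * θ ^ 2 * t) *
      exp (-(z / √(2 * t) + θ * √(2 * t)) ^ 2)) := by
    rw [exp_mul_exp_neg_sq_eq_pker_zero ht, inv_mul_cancel_left₀ (by positivity)]
  rw [hpker]
  simp only [gfun, Function.comp_apply]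
  field_simp
  ring

lemma contDiff_gfun (ht : 0 < t) (θ : ℝ) (n : ℕ) : ContDiff ℝ n (gfun θ t) :=
  contDiff_of_linear_ode (a := 2 * θ) (v := fun z => -(2 * θ) * pker t 0 z)
    (fun z => (hasDerivAt_gfun ht θ z).congr_deriv (by ring))
    (contDiff_const.mul (contDiff_pker t 0))

lemma gfun_isBigO_pker_zero (ht : 0 < t) (θ : ℝ) : gfun θ t =O[atTop] pker t 0 := by
  refine IsBigO.of_bound (2 * |θ| * (√π * √(2 * t))) ?_
  filter_upwards [eventually_ge_atTop (-(2 * θ * t))] with z hz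
  have harg : 0 ≤ z / √(2 * t) + θ * √(2 * t) := by
    have : z / √(2 * t) + θ * √(2 * t) = (z + 2 * θ * t) / √(2 * t) := by
      rw [div_add' _ _ _ (by positivity), mul_assoc, mul_self_sqrt (by positivity)]
      ring
    rw [this]
    exact div_nonneg (by linarith) (sqrt_nonneg _)
  have hpker : 0 ≤ pker t 0 z := by unfold pker; positivity
  calc ‖gfun θ t z‖
      = |θ| * exp (2 * θ * z + 2 * θ ^ 2 * t) * erfc (z / √(2 * t) + θ * √(2 * t)) := by
        rw [gfun, norm_mul, norm_mul, norm_of_nonneg (erfc_nonneg _), norm_eq_abs, norm_eq_abs,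
          abs_exp]
    _ ≤ |θ| * exp (2 * θ * z + 2 * θ ^ 2 * t) *
        (2 * exp (-(z / √(2 * t) + θ * √(2 * t)) ^ 2)) := by
        gcongr
        exact erfc_le_two_mul_exp_neg_sq harg
    _ = 2 * |θ| * (exp (2 * θ * z + 2 * θ ^ 2 * t) *
        exp (-(z / √(2 * t) + θ * √(2 * t)) ^ 2)) := by ring
    _ = 2 * |θ| * (√π * √(2 * t)) * ‖pker t 0 z‖ := by
        rw [exp_mul_exp_neg_sq_eq_pker_zero ht, norm_of_nonneg hpker]
        ring

end BoundaryKernel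

section Semigroup

variable {θ t b : ℝ} {f : ℝ → ℝ}

/-- The contribution `P_t^0 f(x) = ∫_0^∞ (p_t(x,y) − p_t(x,−y)) f(y) dy` to `P_t f` of Brownian
motion killed at `0`. -/
noncomputable def killedPart (t : ℝ) (f : ℝ → ℝ) (x : ℝ) : ℝ :=
  shiftPairing f (pker t 0) (-x) - shiftPairing f (pker t 0) x

/-- The contribution `2 ∫_0^∞ g_t(x + y) f(y) dy + (1/θ) g_t(x) f(0)` to `P_t f` of the paths that
have visited `0`. -/
noncomputable def boundaryPart (θ t : ℝ) (f : ℝ → ℝ) (x : ℝ) : ℝ :=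
  2 * shiftPairing f (gfun θ t) x + (1 / θ) * gfun θ t x * f 0

/-- The inhomogeneity `v(x) = 2θ ∫_0^∞ p_t(0, y + x) f(y) dy + f(0) p_t(0, x)` of the equation
`u' = 2θ u − 2v` solved by `u = boundaryPart θ t f`. -/
noncomputable def boundarySource (θ t : ℝ) (f : ℝ → ℝ) (x : ℝ) : ℝ :=
  2 * θ * shiftPairing f (pker t 0) x + f 0 * pker t 0 x

lemma integrableOn_pker_zero_shift_mul (ht : 0 < t)
    (hf : IntegrableOn (fun y => exp (-b * y) * f y) (Ioi 0)) (x : ℝ) :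
    IntegrableOn (fun y => pker t 0 (y + x) * f y) (Ioi 0) :=
  integrableOn_shift_mul hf (contDiff_pker t 0 (n := 0)).continuous (pker_zero_isBigO_exp ht b) x

lemma integrableOn_gfun_shift_mul (ht : 0 < t)
    (hf : IntegrableOn (fun y => exp (-b * y) * f y) (Ioi 0)) (θ x : ℝ) :
    IntegrableOn (fun y => gfun θ t (y + x) * f y) (Ioi 0) :=
  integrableOn_shift_mul hf (contDiff_gfun ht θ 0).continuous
    ((gfun_isBigO_pker_zero ht θ).trans (pker_zero_isBigO_exp ht b)) x

lemma Pt_eq_killedPart_add_boundaryPart (ht : 0 < t)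
    (hf : IntegrableOn (fun y => exp (-b * y) * f y) (Ioi 0)) (θ : ℝ) :
    Pt θ t f = fun x => killedPart t f x + boundaryPart θ t f x := funext fun x => by
  have hleft := integrableOn_pker_zero_shift_mul ht hf (-x)
  have hright := integrableOn_pker_zero_shift_mul ht hf x
  have hgfun := (integrableOn_gfun_shift_mul ht hf θ x).const_mul 2
  have hkernel (y : ℝ) : (pker t x y - pker t x (-y) + 2 * gfun θ t (x + y)) * f y =
      pker t 0 (y + -x) * f y - pker t 0 (y + x) * f y + 2 * (gfun θ t (y + x) * f y) := by
    rw [pker_eq_pker_zero t x y, pker_eq_pker_zero t x (-y), ← neg_add', even_pker_zero t (y + x),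
      sub_eq_add_neg y x, add_comm x y]
    ring
  simp only [Pt, killedPart, boundaryPart, shiftPairing, hkernel]
  rw [integral_add (by exact hleft.sub hright) hgfun, integral_sub hleft hright,
    integral_const_mul]
  ring

lemma odd_killedPart (t : ℝ) (f : ℝ → ℝ) : (killedPart t f).Odd := fun x => by
  simp only [killedPart, neg_neg, neg_sub]

lemma contDiff_killedPart (ht : 0 < t)
    (hf : IntegrableOn (fun y => exp (-b * y) * f y) (Ioi 0)) (n : ℕ) :
    ContDiff ℝ n (killedPart t f) :=
  have hA := contDiff_shiftPairing_pker_zero ht hf n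
  (hA.comp contDiff_neg).sub hA

lemma deriv_killedPart_zero (ht : 0 < t)
    (hf : IntegrableOn (fun y => exp (-b * y) * f y) (Ioi 0)) :
    deriv (killedPart t f) 0 = -2 * deriv (shiftPairing f (pker t 0)) 0 := by
  have hA : Differentiable ℝ (shiftPairing f (pker t 0)) :=
    (contDiff_shiftPairing_pker_zero ht hf 1).differentiable one_ne_zero
  unfold killedPart
  rw [deriv_fun_sub (by fun_prop) (by fun_prop), deriv_comp_neg, neg_zero]
  ring

lemma hasDerivAt_shiftPairing_gfun (ht : 0 < t)
    (hf : IntegrableOn (fun y => exp (-b * y) * f y) (Ioi 0)) (θ x : ℝ) :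
    HasDerivAt (shiftPairing f (gfun θ t))
      (2 * θ * (shiftPairing f (gfun θ t) x - shiftPairing f (pker t 0) x)) x := by
  have hpker := pker_zero_isBigO_exp ht b
  have hgfun := (gfun_isBigO_pker_zero ht θ).trans hpker
  have hcont : Continuous fun z => 2 * θ * (gfun θ t z - pker t 0 z) :=
    continuous_const.mul
      ((contDiff_gfun ht θ 0).continuous.sub (contDiff_pker t 0 (n := 0)).continuous)
  refine (hasDerivAt_shiftPairing hf (hasDerivAt_gfun ht θ) hgfun hcont
    ((hgfun.sub hpker).const_mul_left _) x).congr_deriv ?_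
  rw [shiftPairing_const_mul, shiftPairing_sub (integrableOn_gfun_shift_mul ht hf θ x)
    (integrableOn_pker_zero_shift_mul ht hf x)]

lemma hasDerivAt_boundaryPart (hθ : θ ≠ 0) (ht : 0 < t)
    (hf : IntegrableOn (fun y => exp (-b * y) * f y) (Ioi 0)) (x : ℝ) :
    HasDerivAt (boundaryPart θ t f)
      (2 * θ * boundaryPart θ t f x + -2 * boundarySource θ t f x) x := by
  refine (((hasDerivAt_shiftPairing_gfun ht hf θ x).const_mul 2).add
    (((hasDerivAt_gfun ht θ x).const_mul (1 / θ)).mul_const (f 0))).congr_deriv ?_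
  simp only [boundaryPart, boundarySource]
  field_simp
  ring

lemma contDiff_boundarySource (ht : 0 < t)
    (hf : IntegrableOn (fun y => exp (-b * y) * f y) (Ioi 0)) (θ : ℝ) (n : ℕ) :
    ContDiff ℝ n (boundarySource θ t f) :=
  (contDiff_const.mul (contDiff_shiftPairing_pker_zero ht hf n)).add
    (contDiff_const.mul (contDiff_pker t 0))

lemma deriv_boundarySource_zero (ht : 0 < t)
    (hf : IntegrableOn (fun y => exp (-b * y) * f y) (Ioi 0)) (θ : ℝ) :
    deriv (boundarySource θ t f) 0 = -θ * deriv (killedPart t f) 0 := by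
  have hA : Differentiable ℝ (shiftPairing f (pker t 0)) :=
    (contDiff_shiftPairing_pker_zero ht hf 1).differentiable one_ne_zero
  have hp : Differentiable ℝ (pker t 0) := (contDiff_pker t 0 (n := 1)).differentiable one_ne_zero
  unfold boundarySource
  rw [deriv_fun_add (by fun_prop) (by fun_prop), deriv_const_mul_field, deriv_const_mul_field,
    (odd_deriv_of_even (even_pker_zero t)).map_zero, mul_zero, add_zero,
    deriv_killedPart_zero ht hf]
  ring

lemma contDiff_boundaryPart (hθ : θ ≠ 0) (ht : 0 < t)
    (hf : IntegrableOn (fun y => exp (-b * y) * f y) (Ioi 0)) (n : ℕ) :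
    ContDiff ℝ n (boundaryPart θ t f) :=
  contDiff_of_linear_ode (hasDerivAt_boundaryPart hθ ht hf)
    (contDiff_const.mul (contDiff_boundarySource ht hf θ n))

lemma contDiff_Pt (hθ : θ ≠ 0) (ht : 0 < t)
    (hf : IntegrableOn (fun y => exp (-b * y) * f y) (Ioi 0)) (n : ℕ) :
    ContDiff ℝ n (Pt θ t f) := by
  rw [Pt_eq_killedPart_add_boundaryPart ht hf θ]
  exact (contDiff_killedPart ht hf n).add (contDiff_boundaryPart hθ ht hf n)

lemma deriv_deriv_killedPart_zero (t : ℝ) (f : ℝ → ℝ) : deriv (deriv (killedPart t f)) 0 = 0 :=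
  (odd_deriv_of_even (even_deriv_of_odd (odd_killedPart t f))).map_zero

lemma deriv_deriv_boundaryPart_zero (hθ : θ ≠ 0) (ht : 0 < t)
    (hf : IntegrableOn (fun y => exp (-b * y) * f y) (Ioi 0)) :
    deriv (deriv (boundaryPart θ t f)) 0 =
      2 * θ * (deriv (killedPart t f) 0 + deriv (boundaryPart θ t f) 0) := by
  have hode : deriv (boundaryPart θ t f) = fun x =>
      2 * θ * boundaryPart θ t f x + -2 * boundarySource θ t f x :=
    funext fun x => (hasDerivAt_boundaryPart hθ ht hf x).deriv
  have hu : DifferentiableAt ℝ (boundaryPart θ t f) 0 :=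
    (hasDerivAt_boundaryPart hθ ht hf 0).differentiableAt
  have hv : Differentiable ℝ (boundarySource θ t f) :=
    (contDiff_boundarySource ht hf θ 1).differentiable one_ne_zero
  calc deriv (deriv (boundaryPart θ t f)) 0
      = 2 * θ * deriv (boundaryPart θ t f) 0 + -2 * deriv (boundarySource θ t f) 0 := by
        conv_lhs => rw [hode]
        rw [deriv_fun_add (by fun_prop) (by fun_prop), deriv_const_mul_field,
          deriv_const_mul_field]
    _ = 2 * θ * (deriv (killedPart t f) 0 + deriv (boundaryPart θ t f) 0) := by
        rw [deriv_boundarySource_zero ht hf θ]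
        ring

lemma deriv_deriv_Pt_zero (hθ : θ ≠ 0) (ht : 0 < t)
    (hf : IntegrableOn (fun y => exp (-b * y) * f y) (Ioi 0)) :
    deriv (deriv (Pt θ t f)) 0 = 2 * θ * deriv (Pt θ t f) 0 := by
  have hw := contDiff_killedPart ht hf 2
  have hu := contDiff_boundaryPart hθ ht hf 2
  have hderiv : deriv (Pt θ t f) = fun x =>
      deriv (killedPart t f) x + deriv (boundaryPart θ t f) x := by
    rw [Pt_eq_killedPart_add_boundaryPart ht hf θ]
    exact funext fun x =>
      deriv_fun_add (hw.differentiable two_ne_zero x) (hu.differentiable two_ne_zero x)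
  rw [hderiv, deriv_fun_add (hw.differentiable_deriv_two 0) (hu.differentiable_deriv_two 0),
    deriv_deriv_killedPart_zero, zero_add, deriv_deriv_boundaryPart_zero hθ ht hf]

end Semigroup

lemma memS.integrableOn_exp_neg_mul {f : ℝ → ℝ} (hf : memS f) :
    IntegrableOn (fun y => exp (-1 * y) * f y) (Ioi 0) := by
  obtain ⟨hdiff, ⟨a, ha⟩, -, -, hinfty⟩ := hf
  exact integrableOn_exp_neg_mul_of_tendsto one_pos hdiff.continuousOn ha (hinfty.isBigO_one ℝ)

theorem Pt_boundary_condition_general {θ t b : ℝ} (hθ : θ ≠ 0) (ht : 0 < t) {f : ℝ → ℝ}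
    (hf : IntegrableOn (fun y => exp (-b * y) * f y) (Ioi 0)) :
    ∃ L M : ℝ,
      Tendsto (deriv (Pt θ t f)) (𝓝[>] 0) (𝓝 L) ∧
      Tendsto (deriv (deriv (Pt θ t f))) (𝓝[>] 0) (𝓝 M) ∧
      M = 2 * θ * L := by
  have hPt : ContDiff ℝ 2 (Pt θ t f) := contDiff_Pt hθ ht hf 2
  have hcont' : Continuous (deriv (Pt θ t f)) := hPt.continuous_deriv one_le_two
  have hcont'' : Continuous (deriv (deriv (Pt θ t f))) := (hPt.iterate_deriv' 0 2).continuous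
  exact ⟨_, _, hcont'.continuousWithinAt, hcont''.continuousWithinAt, deriv_deriv_Pt_zero hθ ht hf⟩

/-- For `f ∈ 𝒮`, the one-sided limits `(P_t f)'(0⁺)` and `(P_t f)''(0⁺)` exist and are
finite, and `(P_t f)''(0⁺) = 2θ·(P_t f)'(0⁺)`. -/
theorem Pt_boundary_condition (θ t : ℝ) (hθ : 0 < θ) (ht : 0 < t)
    (f : ℝ → ℝ) (hf : memS f) :
    ∃ L M : ℝ,
      Filter.Tendsto (deriv (Pt θ t f)) (nhdsWithin 0 (Set.Ioi 0)) (nhds L) ∧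
      Filter.Tendsto (deriv (deriv (Pt θ t f))) (nhdsWithin 0 (Set.Ioi 0)) (nhds M) ∧
      M = 2 * θ * L :=
  Pt_boundary_condition_general hθ.ne' ht hf.integrableOn_exp_neg_mul
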